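/- arXiv:2302.03923 — 2 statements merged into one kernel-verified Lean document; each statement's English description precedes it below -/
import Mathlib

section
/- Let θ and v̂ be positive reals with v̂ < η and θ ≥ max{1, 1/(η − v̂)}. Then the Hausdorff dimension of the set {ξ ∈ ℝ : v̂_{b,A}(ξ) ≥ v̂ and v_{b,A}(ξ) = θ v̂} is at most (ηθ − 1 − θv̂) / ((ηθ − 1)(1 + θv̂)). -/
/-!
The proof is a covering argument along the record minima of `n ↦ ‖b ^ a n * ξ‖`.

Write `V = θ w`, and let `N < N'` be the values of `a` at two consecutive records of `ξ`, with
nearest integers `p, p'` to `b ^ N ξ`, `b ^ N' ξ`. The uniform exponent and the growth of `a`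
give `‖b ^ N ξ‖ < b ^ (-κ N')` with `κ` close to `w / η`, and the asymptotic exponent gives
`‖b ^ N ξ‖ ≥ b ^ (-U N)` with `U` close to `V`. Therefore `κ N' ≤ U N`, and `p'` lies within
`b ^ (N' - N - κ N') + 1` of `b ^ (N' - N) p`. Moreover `b ^ (N' - N - κ N') ≥ 1 / b`, since
otherwise `‖b ^ N' ξ‖ = b ^ (N' - N) ‖b ^ N ξ‖` would not be a record. The relation `Reach`
collects these constraints, and `reach_of_record` shows that all late records of `ξ` obey them.

`reach_card` bounds by `b ^ (α n)` the number of integers reachable at position `n`, as soon as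
`1 - κ - (1 - α) κ / U < α`: in the induction, position `m` contributes at most about
`b ^ (α m) * b ^ (n - m - κ n)` integers, where `m ≥ κ n / U`, and the strict inequality absorbs
the sum over `m` together with the constants. For `κ = w / η`, `U = θ w` the critical value is
`α = 1 - θ w / (η θ - 1)`.

Infinitely many records satisfy `‖b ^ n ξ‖ < b ^ (-(V - ε) n)` (`exists_record`), so `ξ` lies in
infinitely many intervals of radius `b ^ (-(1 + V - ε) n)` around `p / b ^ n` with `p` reachable,
and `dimH_le_of_cover` gives dimension at most `s` whenever `α < s (1 + V - ε)`. Letting `ε → 0`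
(`params_exist`) yields the bound `(1 - θ w / (η θ - 1)) / (1 + θ w)`. The pair from which the
chain of records starts depends on `ξ`, but takes countably many values, and `dimH` is
countably stable.
-/

open Filter MeasureTheory Set

/-- Distance to the nearest integer. -/
noncomputable def dni (x : ℝ) : ℝ := |x - round x|

/-- Asymptotic approximation exponent `v_{b,A}(ξ)` (valued in `EReal`). -/
noncomputable def vbA (b : ℕ) (a : ℕ → ℕ) (ξ : ℝ) : EReal :=
  sSup ((fun v : ℝ => (v : EReal)) ''
    {v : ℝ | 0 ≤ v ∧ ∃ᶠ n in atTop, 1 ≤ n ∧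
      dni ((b : ℝ) ^ (a n) * ξ) < (b : ℝ) ^ (-(a n : ℝ) * v)})

/-- Uniform approximation exponent `v̂_{b,A}(ξ)` (valued in `EReal`). -/
noncomputable def vhatbA (b : ℕ) (a : ℕ → ℕ) (ξ : ℝ) : EReal :=
  sSup ((fun v : ℝ => (v : EReal)) ''
    {v : ℝ | 0 ≤ v ∧ ∀ᶠ N in atTop, ∃ n, 1 ≤ n ∧ n ≤ N ∧
      dni ((b : ℝ) ^ (a n) * ξ) < (b : ℝ) ^ (-(a N : ℝ) * v)})

/-! ### Choice of parameters -/

/-- Every `s` above the claimed bound leaves room for a loss `ε` in the exponents and for a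
counting exponent `α`, slightly above the critical value `1 - θ w / (η θ - 1)`. -/
lemma params_exist {η θ w s : ℝ} (hw : 0 < w) (hwη : w < η) (hθ : 0 < θ)
    (hge : 1 / (η - w) ≤ θ)
    (hs : (η * θ - 1 - θ * w) / ((η * θ - 1) * (1 + θ * w)) < s) :
    ∃ ε α : ℝ, 0 < ε ∧ ε < w ∧ ε < θ * w ∧ 0 < α ∧ α ≤ 1 ∧
      1 - (w - ε) / (η + ε) - (1 - α) * ((w - ε) / (η + ε)) / (θ * w + ε) < α ∧
      α < s * (1 + (θ * w - ε)) := by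
  have hη : 0 < η := hw.trans hwη
  have h1 : 1 ≤ θ * (η - w) := by
    rwa [div_le_iff₀ (by linarith)] at hge
  have hθw : 0 < θ * w := mul_pos hθ hw
  have hD : 0 < η * θ - 1 := by nlinarith
  obtain ⟨α, hα0, hα1⟩ : ∃ α, 1 - θ * w / (η * θ - 1) < α ∧ α < min 1 (s * (1 + θ * w)) := by
    apply exists_between
    apply lt_min
    · have : 0 < θ * w / (η * θ - 1) := by positivity
      linarith
    · rw [← div_lt_iff₀ (by positivity)]
      have hD' : η * θ - 1 ≠ 0 := hD.ne'
      have hV' : 1 + θ * w ≠ 0 := by positivity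
      have e : (1 - θ * w / (η * θ - 1)) / (1 + θ * w)
          = (η * θ - 1 - θ * w) / ((η * θ - 1) * (1 + θ * w)) := by
        rw [one_sub_div hD', div_div]
      rwa [e]
  have hα2 : α < 1 := hα1.trans_le (min_le_left _ _)
  have hα3 : α < s * (1 + θ * w) := hα1.trans_le (min_le_right _ _)
  have hα4 : 0 < α := by
    have : θ * w / (η * θ - 1) ≤ 1 := by
      rw [div_le_one hD]; nlinarith
    linarith
  have hkey : 1 - w / η - (1 - α) * (w / η) / (θ * w) < α := by
    have : (1 - α) * (η * θ - 1) < θ * w := by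
      rw [← lt_div_iff₀ hD]; linarith
    have e : α - (1 - w / η - (1 - α) * (w / η) / (θ * w))
        = (θ * w - (1 - α) * (η * θ - 1)) / (η * θ) := by
      field_simp
      ring
    have : 0 < (θ * w - (1 - α) * (η * θ - 1)) / (η * θ) := by
      apply div_pos <;> [linarith; positivity]
    linarith
  have c1 : ContinuousAt (fun ε : ℝ => 1 - (w - ε) / (η + ε)
      - (1 - α) * ((w - ε) / (η + ε)) / (θ * w + ε)) 0 := by
    have a1 : η + (0 : ℝ) ≠ 0 := by simpa using hη.ne'
    have a2 : θ * w + (0 : ℝ) ≠ 0 := by simpa using hθw.ne'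
    fun_prop (disch := assumption)
  have c2 : ContinuousAt (fun ε : ℝ => s * (1 + (θ * w - ε))) 0 := by fun_prop
  have e1 := c1.tendsto.eventually_lt_const (u := α) (by simpa using hkey)
  have e2 := c2.tendsto.eventually_const_lt (u := α) (by simpa using hα3)
  have e3 : ∀ᶠ ε : ℝ in nhds 0, ε < min w (θ * w) := eventually_lt_nhds (lt_min hw hθw)
  have e4 := (e1.and (e2.and e3)).filter_mono (nhdsWithin_le_nhds (s := Ioi 0))
  obtain ⟨ε, ⟨h1, h2, h3⟩, h4⟩ := (e4.and self_mem_nhdsWithin).exists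
  exact ⟨ε, α, h4, h3.trans_le (min_le_left _ _), h3.trans_le (min_le_right _ _), hα4, hα2.le, h1, h2⟩

/-! ### Counting reachable integers -/

/-- `Reach b κ U N₀ p₀ n q`: starting from the integer `p₀` at position `N₀`, the integer `q` at
position `n` can be reached by steps `(m, p) → (n, q)` satisfying the constraints that hold
between the nearest integers to `b ^ m ξ` and `b ^ n ξ` at consecutive records. -/
inductive Reach (b : ℕ) (κ U : ℝ) (N₀ : ℕ) (p₀ : ℤ) : ℕ → ℤ → Prop
  | base : Reach b κ U N₀ p₀ N₀ p₀
  | step {m n : ℕ} {p q : ℤ} (h : Reach b κ U N₀ p₀ m p) (hmn : m < n)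
      (hU : κ * n ≤ U * m)
      (hR : (b : ℝ)⁻¹ ≤ (b : ℝ) ^ ((n : ℝ) - m - κ * n))
      (hq : |(q : ℝ) - (b : ℝ) ^ (n - m) * p| ≤ (b : ℝ) ^ ((n : ℝ) - m - κ * n) + 1) :
      Reach b κ U N₀ p₀ n q

/-- The hypothesis `b⁻¹ ≤ R` makes the number of integers in a window of radius `R + 1`
proportional to `R`. -/
lemma card_window (b : ℕ) (hb : 2 ≤ b) (y R : ℝ) (hR : (b : ℝ)⁻¹ ≤ R) :
    ((Finset.Icc ⌈y - (R + 1)⌉ ⌊y + (R + 1)⌋).card : ℝ) ≤ (b : ℝ) ^ (3 : ℝ) * R := by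
  have hb' : (2 : ℝ) ≤ b := by exact_mod_cast hb
  have hR0 : 0 < R := lt_of_lt_of_le (by positivity) hR
  have h1 : 1 ≤ b * R := by
    have := mul_le_mul_of_nonneg_left hR (by positivity : (0:ℝ) ≤ b)
    rwa [mul_inv_cancel₀ (by positivity)] at this
  have h2 : ((Finset.Icc ⌈y - (R + 1)⌉ ⌊y + (R + 1)⌋).card : ℝ) ≤ 2 * R + 3 := by
    rw [Int.card_Icc]
    have : (((⌊y + (R + 1)⌋ + 1 - ⌈y - (R + 1)⌉).toNat : ℤ) : ℝ) ≤ 2 * R + 3 := by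
      rw [Int.toNat_eq_max]
      push_cast
      apply max_le
      · linarith [Int.floor_le (y + (R + 1)), Int.le_ceil (y - (R + 1))]
      · linarith
    exact_mod_cast this
  have h3 : (b : ℝ) ^ (3 : ℝ) = b * b * b := by
    rw [show (3 : ℝ) = ((3 : ℕ) : ℝ) by norm_num, Real.rpow_natCast]; ring
  rw [h3]
  nlinarith [mul_le_mul hb' hb' (by norm_num) (by positivity), mul_pos (by positivity : (0:ℝ) < b) hR0]

lemma exists_threshold (b : ℕ) (hb : 2 ≤ b) (γ : ℝ) (hγ : 0 < γ) :
    ∃ L : ℕ, ∀ n ≥ L, (n : ℝ) * (b : ℝ) ^ (3 : ℝ) ≤ (b : ℝ) ^ (γ * n) := by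
  have hb' : (1 : ℝ) < b := by exact_mod_cast hb
  have hr : (b : ℝ) ^ (-γ) < 1 := Real.rpow_lt_one_of_one_lt_of_neg hb' (by linarith)
  have h := (tendsto_self_mul_const_pow_of_lt_one (by positivity) hr).const_mul ((b : ℝ) ^ (3 : ℝ))
  rw [mul_zero] at h
  obtain ⟨L, hL⟩ := eventually_atTop.1 (h.eventually_lt_const one_pos)
  refine ⟨L, fun n hn => ?_⟩
  have := hL n hn
  rw [← Real.rpow_natCast, ← Real.rpow_mul (by positivity), neg_mul, Real.rpow_neg (by positivity)] at this
  have hp : (0 : ℝ) < (b : ℝ) ^ (γ * n) := by positivity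
  rw [← mul_assoc, ← div_eq_mul_inv, div_lt_one hp] at this
  linarith

lemma Reach.le {b : ℕ} {κ U : ℝ} {N₀ : ℕ} {p₀ : ℤ} {n : ℕ} {p : ℤ}
    (h : Reach b κ U N₀ p₀ n p) : N₀ ≤ n := by
  induction h with
  | base => exact le_rfl
  | step _ hmn _ _ _ ih => omega

/-- Counting bound. The threshold `L` is where the strict inequality `hlt` absorbs the number of
possible predecessors of `n` and the constant from `card_window`. -/
lemma reach_card (b : ℕ) (hb : 2 ≤ b) {κ U α : ℝ} (hU : 0 < U) (hα : 0 < α) (hα1 : α ≤ 1)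
    (hlt : 1 - κ - (1 - α) * κ / U < α) :
    ∃ L : ℕ, ∀ N₀ ≥ L, ∀ p₀ : ℤ, ∀ n, ∃ F : Finset ℤ, (∀ p, Reach b κ U N₀ p₀ n p → p ∈ F) ∧
      (F.card : ℝ) ≤ (b : ℝ) ^ (α * n) := by
  have hb1 : (1 : ℝ) < b := by exact_mod_cast hb
  have hb0 : (0 : ℝ) < b := by positivity
  obtain ⟨L, hL⟩ := exists_threshold b hb (α - (1 - κ - (1 - α) * κ / U)) (by linarith)
  refine ⟨L, fun N₀ hN p₀ n => ?_⟩
  induction n using Nat.strong_induction_on with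
  | _ n ih =>
  rcases lt_trichotomy n N₀ with h | h | h
  · exact ⟨∅, fun p hp => absurd hp.le (by omega), by simp; positivity⟩
  · subst h
    refine ⟨{p₀}, fun p hp => ?_, ?_⟩
    · cases hp with
      | base => simp
      | step h hmn _ _ _ => exact absurd h.le (by omega)
    · simpa using Real.one_le_rpow hb1.le (by positivity)
  choose! F hF hFc using ih
  let R : ℕ → ℝ := fun m => (b : ℝ) ^ ((n : ℝ) - m - κ * n)
  let S : Finset ℕ := {m ∈ Finset.range n | κ * n ≤ U * m ∧ (b : ℝ)⁻¹ ≤ R m}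
  let G : ℕ → ℤ → Finset ℤ := fun m p =>
    Finset.Icc ⌈(b : ℝ) ^ (n - m) * p - (R m + 1)⌉ ⌊(b : ℝ) ^ (n - m) * p + (R m + 1)⌋
  refine ⟨S.biUnion fun m => (F m).biUnion (G m), fun p hp => ?_, ?_⟩
  · cases hp with
    | base => omega
    | @step m _ p' _ hr hmn hUm hR hq =>
      simp only [Finset.mem_biUnion]
      refine ⟨m, by simp [S, hmn, hUm, R, hR], p', hF m hmn _ hr, ?_⟩
      rw [abs_le] at hq
      simp only [G, Finset.mem_Icc, Int.ceil_le, Int.le_floor, R]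
      constructor <;> linarith
  · have key : ∀ m ∈ S, (((F m).biUnion (G m)).card : ℝ) ≤
        (b : ℝ) ^ (3 : ℝ) * (b : ℝ) ^ ((1 - κ - (1 - α) * κ / U) * n) := by
      intro m hm
      simp only [S, Finset.mem_filter, Finset.mem_range] at hm
      obtain ⟨hmn, hUm, hR⟩ := hm
      calc (((F m).biUnion (G m)).card : ℝ) ≤ ∑ p ∈ F m, ((G m p).card : ℝ) := by
            exact_mod_cast Finset.card_biUnion_le
        _ ≤ ∑ p ∈ F m, (b : ℝ) ^ (3 : ℝ) * R m :=
            Finset.sum_le_sum fun p _ => card_window b hb _ _ hR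
        _ = (F m).card * ((b : ℝ) ^ (3 : ℝ) * R m) := by simp
        _ ≤ (b : ℝ) ^ (α * m) * ((b : ℝ) ^ (3 : ℝ) * R m) :=
            mul_le_mul_of_nonneg_right (hFc m hmn) (by positivity)
        _ = (b : ℝ) ^ (3 : ℝ) * (b : ℝ) ^ (α * m + ((n : ℝ) - m - κ * n)) := by
            rw [Real.rpow_add hb0]; ring
        _ ≤ _ := by
            gcongr
            · exact hb1.le
            -- The constraint `κ n ≤ U m` makes the exponent largest at `m = κ n / U`.
            have h1 : κ * n / U ≤ m := by rw [div_le_iff₀ hU]; linarith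
            have h2 := mul_le_mul_of_nonneg_left h1 (by linarith : 0 ≤ 1 - α)
            have e : (1 - κ - (1 - α) * κ / U) * n = n - κ * n - (1 - α) * (κ * n / U) := by ring
            rw [e]
            linarith
    calc ((S.biUnion fun m => (F m).biUnion (G m)).card : ℝ)
        ≤ ∑ m ∈ S, (((F m).biUnion (G m)).card : ℝ) := by exact_mod_cast Finset.card_biUnion_le
      _ ≤ ∑ m ∈ S, (b : ℝ) ^ (3 : ℝ) * (b : ℝ) ^ ((1 - κ - (1 - α) * κ / U) * n) :=
          Finset.sum_le_sum key
      _ = S.card * ((b : ℝ) ^ (3 : ℝ) * (b : ℝ) ^ ((1 - κ - (1 - α) * κ / U) * n)) := by simp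
      _ ≤ n * ((b : ℝ) ^ (3 : ℝ) * (b : ℝ) ^ ((1 - κ - (1 - α) * κ / U) * n)) := by
          gcongr
          exact (Finset.card_filter_le _ _).trans (by simp)
      _ = (n * (b : ℝ) ^ (3 : ℝ)) * (b : ℝ) ^ ((1 - κ - (1 - α) * κ / U) * n) := by ring
      _ ≤ (b : ℝ) ^ ((α - (1 - κ - (1 - α) * κ / U)) * n)
            * (b : ℝ) ^ ((1 - κ - (1 - α) * κ / U) * n) := by
          gcongr
          exact hL n (by omega)
      _ = (b : ℝ) ^ (α * n) := by
          rw [← Real.rpow_add hb0]; congr 1; ring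

/-! ### The covering estimate -/

/-- Borel–Cantelli for Hausdorff measure: `∑ n, b ^ (α n) * b ^ (-(1 + V) n s)` converges. -/
lemma dimH_le_of_cover (b : ℕ) (hb : 2 ≤ b) {α V s : ℝ} (hs : 0 ≤ s) (hV : 0 ≤ V)
    (h : α < s * (1 + V)) (F : ℕ → Finset ℤ) (hF : ∀ n, ((F n).card : ℝ) ≤ (b : ℝ) ^ (α * n))
    (E : Set ℝ)
    (hE : ∀ ξ ∈ E, ∃ᶠ n in atTop, ∃ p ∈ F n, |(b : ℝ) ^ n * ξ - p| ≤ (b : ℝ) ^ (-(n : ℝ) * V)) :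
    dimH E ≤ ENNReal.ofReal s := by
  have hb1 : (1 : ℝ) < b := by exact_mod_cast hb
  have hb0 : (0 : ℝ) < b := by positivity
  let ρ : ℕ → ℝ := fun n => (b : ℝ) ^ (-(1 + V) * n)
  have hρ0 : ∀ n, 0 < ρ n := fun n => by positivity
  have hρanti : Antitone ρ := by
    intro m n hmn
    apply Real.rpow_le_rpow_of_exponent_le hb1.le
    have : (m : ℝ) ≤ n := by exact_mod_cast hmn
    nlinarith
  have hρlim : Tendsto ρ atTop (nhds 0) := by
    have hr : (b : ℝ) ^ (-(1 + V)) < 1 := Real.rpow_lt_one_of_one_lt_of_neg hb1 (by linarith)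
    refine (tendsto_pow_atTop_nhds_zero_of_lt_one (by positivity) hr).congr fun n => ?_
    rw [← Real.rpow_natCast, ← Real.rpow_mul hb0.le]
  let q : ℝ := (b : ℝ) ^ (α - s * (1 + V))
  have hq0 : 0 < q := by positivity
  have hq1 : q < 1 := Real.rpow_lt_one_of_one_lt_of_neg hb1 (by linarith)
  let t : ∀ K : ℕ, (Σ i : ℕ, F (i + K)) → Set ℝ := fun K x =>
    Metric.closedBall ((x.2 : ℤ) / (b : ℝ) ^ (x.1 + K)) (ρ (x.1 + K))
  have hdiam : ∀ K x, Metric.ediam (t K x) ≤ ENNReal.ofReal (2 * ρ (x.1 + K)) := by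
    intro K x
    apply Metric.ediam_le_of_forall_dist_le
    intro y hy z hz
    have := dist_triangle_right y z ((x.2 : ℤ) / (b : ℝ) ^ (x.1 + K))
    have h1 := Metric.mem_closedBall.1 hy
    have h2 := Metric.mem_closedBall.1 hz
    linarith
  have hterm : ∀ K i, ∑' p : F (i + K), Metric.ediam (t K ⟨i, p⟩) ^ s ≤
      ENNReal.ofReal (2 ^ s * q ^ i) := by
    intro K i
    calc ∑' p : F (i + K), Metric.ediam (t K ⟨i, p⟩) ^ s
        ≤ ∑' p : F (i + K), ENNReal.ofReal ((2 * ρ (i + K)) ^ s) := by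
          refine ENNReal.tsum_le_tsum fun p => ?_
          rw [← ENNReal.ofReal_rpow_of_nonneg (by have := hρ0 (i + K); positivity) hs]
          exact ENNReal.rpow_le_rpow (hdiam K ⟨i, p⟩) hs
      _ = ENNReal.ofReal ((F (i + K)).card * (2 * ρ (i + K)) ^ s) := by
          rw [tsum_fintype]
          simp [ENNReal.ofReal_mul]
      _ ≤ ENNReal.ofReal (2 ^ s * q ^ i) := by
          apply ENNReal.ofReal_le_ofReal
          calc ((F (i + K)).card : ℝ) * (2 * ρ (i + K)) ^ s
              ≤ (b : ℝ) ^ (α * (i + K : ℕ)) * (2 * ρ (i + K)) ^ s := by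
                refine mul_le_mul_of_nonneg_right (hF _) ?_
                have := hρ0 (i + K)
                positivity
            _ = 2 ^ s * q ^ (i + K) := by
                rw [Real.mul_rpow (by norm_num) (hρ0 _).le, ← Real.rpow_mul hb0.le, mul_left_comm,
                  ← Real.rpow_add hb0, ← Real.rpow_natCast, ← Real.rpow_mul hb0.le]
                congr 2
                ring
            _ ≤ 2 ^ s * q ^ i := by
                gcongr 2 ^ s * ?_
                exact pow_le_pow_of_le_one hq0.le hq1.le (by omega)
  have hsum : ∑' i : ℕ, ENNReal.ofReal (2 ^ s * q ^ i) ≠ ⊤ :=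
    ((summable_geometric_of_lt_one hq0.le hq1).mul_left _).tsum_ofReal_ne_top
  have hmeas : Measure.hausdorffMeasure s E ≤
      liminf (fun K => ∑' x, Metric.ediam (t K x) ^ s) atTop := by
    refine Measure.hausdorffMeasure_le_liminf_tsum s E (fun K => ENNReal.ofReal (2 * ρ K))
      ?_ t (Eventually.of_forall fun K x => ?_) (Eventually.of_forall fun K ξ hξ => ?_)
    · simpa using ENNReal.tendsto_ofReal (hρlim.const_mul 2)
    · refine (hdiam K x).trans (ENNReal.ofReal_le_ofReal ?_)
      have := hρanti (show K ≤ x.1 + K by omega)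
      linarith
    · obtain ⟨n, hn, p, hp, hnp⟩ := frequently_atTop.1 (hE ξ hξ) K
      obtain ⟨i, rfl⟩ := Nat.exists_eq_add_of_le' hn
      refine mem_iUnion.2 ⟨⟨i, p, hp⟩, ?_⟩
      simp only [t, Metric.mem_closedBall, Real.dist_eq]
      have hpow : (0 : ℝ) < (b : ℝ) ^ (i + K) := by positivity
      have e : ξ - p / (b : ℝ) ^ (i + K) = ((b : ℝ) ^ (i + K) * ξ - p) / (b : ℝ) ^ (i + K) := by
        field_simp
      rw [e, abs_div, abs_of_pos hpow, div_le_iff₀ hpow]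
      refine hnp.trans_eq ?_
      rw [← Real.rpow_natCast, ← Real.rpow_add hb0]
      congr 1
      ring
  have hbound : liminf (fun K => ∑' x, Metric.ediam (t K x) ^ s) atTop ≤
      ∑' i : ℕ, ENNReal.ofReal (2 ^ s * q ^ i) := by
    refine liminf_le_of_le (by isBoundedDefault) fun c hc => ?_
    obtain ⟨K, hK⟩ := hc.exists
    refine hK.trans ?_
    rw [ENNReal.tsum_sigma']
    exact ENNReal.tsum_le_tsum (hterm K)
  refine dimH_le_of_hausdorffMeasure_ne_top (d := s.toNNReal) ?_
  rw [Real.coe_toNNReal s hs]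
  exact ne_top_of_le_ne_top hsum (hmeas.trans hbound)

/-! ### Records of the distance to the nearest integer -/

lemma dni_nonneg (x : ℝ) : 0 ≤ dni x := abs_nonneg _

lemma dni_mul_pow_eq_zero (b k : ℕ) {x : ℝ} (h : dni x = 0) : dni ((b : ℝ) ^ k * x) = 0 := by
  have hx : x = round x := by
    have := abs_eq_zero.1 h
    linarith
  have e : (b : ℝ) ^ k * x = (((b : ℤ) ^ k * round x : ℤ) : ℝ) := by
    push_cast
    rw [← hx]
  rw [e, dni, round_intCast, sub_self, abs_zero]

lemma dni_mul_pow (b k : ℕ) {x : ℝ} (h : (b : ℝ) ^ k * dni x < 1 / 2) :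
    dni ((b : ℝ) ^ k * x) = (b : ℝ) ^ k * dni x := by
  have e : (b : ℝ) ^ k * dni x = |(b : ℝ) ^ k * x - (((b : ℤ) ^ k * round x : ℤ) : ℝ)| := by
    rw [dni, ← abs_of_nonneg (by positivity : (0:ℝ) ≤ (b : ℝ) ^ k), ← abs_mul, mul_sub,
      abs_of_nonneg (by positivity : (0:ℝ) ≤ (b : ℝ) ^ k)]
    push_cast
    rfl
  have hr : round ((b : ℝ) ^ k * x) = (b : ℤ) ^ k * round x := by
    rw [round_eq_iff]
    rw [e, abs_lt] at h
    constructor <;> linarith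
  rw [e, dni, hr]

/-- `n` minimises `i ↦ ‖b ^ a i * ξ‖` over `1 ≤ i ≤ n`; ties are allowed. -/
def IsRecord (b : ℕ) (a : ℕ → ℕ) (ξ : ℝ) (n : ℕ) : Prop :=
  1 ≤ n ∧ ∀ i, 1 ≤ i → i ≤ n → dni ((b : ℝ) ^ a n * ξ) ≤ dni ((b : ℝ) ^ a i * ξ)

/-- Each record after `n₀` is reachable from `n₀`. The predecessor of a record `N + 1` is a minimiser
over `[n₀, N]`, which is again a record because `n₀` is one. -/
lemma reach_of_record (b : ℕ) (hb : 2 ≤ b) {a : ℕ → ℕ} (ha : StrictMono a) {ξ w η U : ℝ}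
    (hw : 0 < w) (hη : 0 < η) {n₀ : ℕ} (hn₀ : IsRecord b a ξ n₀)
    (hU : ∀ n ≥ n₀, (b : ℝ) ^ (-(a n : ℝ) * U) ≤ dni ((b : ℝ) ^ a n * ξ))
    (huni : ∀ N ≥ n₀, ∃ n, 1 ≤ n ∧ n ≤ N ∧ dni ((b : ℝ) ^ a n * ξ) < (b : ℝ) ^ (-(a N : ℝ) * w))
    (hgrow : ∀ n ≥ n₀, (a (n + 1) : ℝ) ≤ η * a n) {n : ℕ} (hn : n₀ ≤ n)
    (hrec : IsRecord b a ξ n) :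
    Reach b (w / η) U (a n₀) (round ((b : ℝ) ^ a n₀ * ξ)) (a n) (round ((b : ℝ) ^ a n * ξ)) := by
  have hb1 : (1 : ℝ) < b := by exact_mod_cast hb
  have hb0 : (0 : ℝ) < b := by positivity
  induction n using Nat.strong_induction_on with
  | _ n ih =>
  rcases hn.eq_or_lt with rfl | hlt
  · exact .base
  obtain ⟨N, rfl⟩ : ∃ N, n = N + 1 := ⟨n - 1, by omega⟩
  obtain ⟨m, hm, hmin⟩ := Finset.exists_min_image (Finset.Icc n₀ N)
    (fun i => dni ((b : ℝ) ^ a i * ξ)) ⟨n₀, by simp; omega⟩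
  simp only [Finset.mem_Icc] at hm hmin
  have hmin' : ∀ i, 1 ≤ i → i ≤ N → dni ((b : ℝ) ^ a m * ξ) ≤ dni ((b : ℝ) ^ a i * ξ) := by
    intro i hi hiN
    rcases le_total n₀ i with h | h
    · exact hmin i ⟨h, hiN⟩
    · exact (hmin n₀ ⟨le_rfl, by omega⟩).trans (hn₀.2 i hi h)
  have hmrec : IsRecord b a ξ m := ⟨hn₀.1.trans hm.1, fun i hi him => hmin' i hi (him.trans hm.2)⟩
  have hreach := ih m (by omega) hm.1 hmrec
  have hlt' : a m < a (N + 1) := ha (by omega)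
  obtain ⟨k, hk⟩ := Nat.exists_eq_add_of_lt hlt'
  have hsmall : dni ((b : ℝ) ^ a m * ξ) < (b : ℝ) ^ (-(w / η * a (N + 1))) := by
    obtain ⟨i, hi, hiN, hilt⟩ := huni N (by omega)
    refine (hmin' i hi hiN).trans_lt (hilt.trans_le ?_)
    apply Real.rpow_le_rpow_of_exponent_le hb1.le
    have h1 := hgrow N (by omega)
    have h2 : w / η * a (N + 1) ≤ w / η * (η * a N) := by gcongr
    have h3 : w / η * (η * a N) = w * a N := by field_simp
    linarith
  have hkey : (b : ℝ) ^ (a (N + 1) - a m) * (b : ℝ) ^ (-(w / η * a (N + 1)))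
      = (b : ℝ) ^ ((a (N + 1) : ℝ) - a m - w / η * a (N + 1)) := by
    rw [← Real.rpow_natCast, ← Real.rpow_add hb0, Nat.cast_sub hlt'.le]
    congr 1
  have hpos : 0 < dni ((b : ℝ) ^ a m * ξ) := lt_of_lt_of_le (by positivity) (hU m hm.1)
  have hmul : (b : ℝ) ^ (a (N + 1) - a m) * ((b : ℝ) ^ a m * ξ) = (b : ℝ) ^ a (N + 1) * ξ := by
    rw [← mul_assoc, ← pow_add, Nat.sub_add_cancel hlt'.le]
  have hle : (b : ℝ) ^ (a (N + 1) - a m) * dni ((b : ℝ) ^ a m * ξ) ≤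
      (b : ℝ) ^ ((a (N + 1) : ℝ) - a m - w / η * a (N + 1)) := by
    rw [← hkey]
    gcongr
  refine .step hreach hlt' ?_ ?_ ?_
  · have h1 := (hU m hm.1).trans_lt hsmall
    rw [Real.rpow_lt_rpow_left_iff hb1] at h1
    linarith
  · have hhalf : 1 / 2 ≤ (b : ℝ) ^ (a (N + 1) - a m) * dni ((b : ℝ) ^ a m * ξ) := by
      -- Otherwise multiplication by a power of `b` just scales the distance up, and `N + 1` is
      -- farther from an integer than `m`, which is impossible for a record.
      by_contra! hcon
      have h1 := dni_mul_pow b _ hcon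
      rw [hmul] at h1
      have h2 := hrec.2 m hmrec.1 (by omega)
      have h3 : (1 : ℝ) < (b : ℝ) ^ (a (N + 1) - a m) := one_lt_pow₀ hb1 (by omega)
      rw [h1] at h2
      nlinarith
    refine le_trans ?_ (hhalf.trans hle)
    rw [one_div]
    gcongr
    exact_mod_cast hb
  · have h1 := abs_sub_round ((b : ℝ) ^ a (N + 1) * ξ)
    have h2 : |(b : ℝ) ^ a (N + 1) * ξ - (b : ℝ) ^ (a (N + 1) - a m) * round ((b : ℝ) ^ a m * ξ)|
        = (b : ℝ) ^ (a (N + 1) - a m) * dni ((b : ℝ) ^ a m * ξ) := by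
      rw [← hmul, ← mul_sub, abs_mul, abs_of_nonneg (by positivity), dni]
    have h3 := abs_sub_le (round ((b : ℝ) ^ a (N + 1) * ξ) : ℝ) ((b : ℝ) ^ a (N + 1) * ξ)
      ((b : ℝ) ^ (a (N + 1) - a m) * round ((b : ℝ) ^ a m * ξ))
    rw [abs_sub_comm (round ((b : ℝ) ^ a (N + 1) * ξ) : ℝ) ((b : ℝ) ^ a (N + 1) * ξ)] at h3
    linarith

/-- A minimiser over `[1, M]` is at least as well approximated as `M`, hence inherits the bound in
the asymptotic exponent; it is a late index once `M` is large, as no distance vanishes. -/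
lemma exists_record (b : ℕ) (hb : 2 ≤ b) {a : ℕ → ℕ} (ha : StrictMono a) {ξ V : ℝ}
    (hV : 0 < V) (hpos : ∀ n, 0 < dni ((b : ℝ) ^ a n * ξ))
    (hfreq : ∃ᶠ n in atTop, 1 ≤ n ∧ dni ((b : ℝ) ^ a n * ξ) < (b : ℝ) ^ (-(a n : ℝ) * V)) (K : ℕ) :
    ∃ n ≥ K, IsRecord b a ξ n ∧ dni ((b : ℝ) ^ a n * ξ) < (b : ℝ) ^ (-(a n : ℝ) * V) := by
  have hb1 : (1 : ℝ) < b := by exact_mod_cast hb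
  have hb0 : (0 : ℝ) < b := by positivity
  have hlim : Tendsto (fun n => (b : ℝ) ^ (-(a n : ℝ) * V)) atTop (nhds 0) := by
    have h1 : Tendsto (fun n => (a n : ℝ)) atTop atTop :=
      tendsto_natCast_atTop_atTop.comp ha.tendsto_atTop
    have h2 := (tendsto_rpow_atBot_of_base_gt_one (b : ℝ) hb1).comp
      (tendsto_neg_atTop_atBot.comp (h1.atTop_mul_const hV))
    refine h2.congr fun n => ?_
    simp
  have hall : ∀ᶠ n in atTop, ∀ i ∈ Finset.range K,
      (b : ℝ) ^ (-(a n : ℝ) * V) < dni ((b : ℝ) ^ a i * ξ) :=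
    (Finset.eventually_all _).2 fun i _ => hlim.eventually_lt_const (hpos i)
  obtain ⟨M, ⟨hM1, hM2⟩, hM3⟩ := (hfreq.and_eventually hall).exists
  obtain ⟨n, hn, hmin⟩ := Finset.exists_min_image (Finset.Icc 1 M)
    (fun i => dni ((b : ℝ) ^ a i * ξ)) ⟨1, by simp; omega⟩
  simp only [Finset.mem_Icc] at hn hmin
  have hnM := (hmin M ⟨hM1, le_rfl⟩).trans_lt hM2
  refine ⟨n, ?_, ⟨hn.1, fun i hi hin => hmin i ⟨hi, hin.trans hn.2⟩⟩, hnM.trans_le ?_⟩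
  · by_contra! hcon
    exact absurd (hM3 n (by simpa using hcon)) (not_lt.2 hnM.le)
  · apply Real.rpow_le_rpow_of_exponent_le hb1.le
    have : (a n : ℝ) ≤ a M := by exact_mod_cast ha.monotone hn.2
    nlinarith

/-! ### Unfolding the exponents -/

lemma vbA_lower {b : ℕ} {a : ℕ → ℕ} {ξ v ε : ℝ}
    (h : vbA b a ξ = (v : EReal)) (hv : 0 ≤ v) (hε : 0 < ε) :
    ∀ᶠ n in atTop, (b : ℝ) ^ (-(a n : ℝ) * (v + ε)) ≤ dni ((b : ℝ) ^ a n * ξ) := by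
  by_contra hcon
  rw [not_eventually] at hcon
  have h1 : ((v + ε : ℝ) : EReal) ≤ vbA b a ξ := by
    apply le_sSup
    refine ⟨v + ε, ⟨by linarith, ?_⟩, rfl⟩
    exact (hcon.and_eventually (eventually_ge_atTop 1)).mono fun n hn => ⟨hn.2, not_le.1 hn.1⟩
  rw [h, EReal.coe_le_coe_iff] at h1
  linarith

lemma vbA_upper {b : ℕ} (hb : 2 ≤ b) {a : ℕ → ℕ} {ξ v ε : ℝ}
    (h : vbA b a ξ = (v : EReal)) (hε : 0 < ε) :
    ∃ᶠ n in atTop, 1 ≤ n ∧ dni ((b : ℝ) ^ a n * ξ) < (b : ℝ) ^ (-(a n : ℝ) * (v - ε)) := by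
  have hb1 : (1 : ℝ) < b := by exact_mod_cast hb
  have h1 : ((v - ε : ℝ) : EReal) < vbA b a ξ := by
    rw [h, EReal.coe_lt_coe_iff]; linarith
  obtain ⟨_, ⟨u, ⟨_, hu⟩, rfl⟩, hlt⟩ := lt_sSup_iff.1 h1
  rw [EReal.coe_lt_coe_iff] at hlt
  refine hu.mono fun n hn => ⟨hn.1, hn.2.trans_le ?_⟩
  apply Real.rpow_le_rpow_of_exponent_le hb1.le
  nlinarith [Nat.cast_nonneg (α := ℝ) (a n)]

lemma vhatbA_upper {b : ℕ} (hb : 2 ≤ b) {a : ℕ → ℕ} {ξ w ε : ℝ}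
    (h : (w : EReal) ≤ vhatbA b a ξ) (hε : 0 < ε) :
    ∀ᶠ N in atTop, ∃ n, 1 ≤ n ∧ n ≤ N ∧
      dni ((b : ℝ) ^ a n * ξ) < (b : ℝ) ^ (-(a N : ℝ) * (w - ε)) := by
  have hb1 : (1 : ℝ) < b := by exact_mod_cast hb
  have h1 : ((w - ε : ℝ) : EReal) < vhatbA b a ξ := by
    refine lt_of_lt_of_le ?_ h
    rw [EReal.coe_lt_coe_iff]; linarith
  obtain ⟨_, ⟨u, ⟨_, hu⟩, rfl⟩, hlt⟩ := lt_sSup_iff.1 h1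
  rw [EReal.coe_lt_coe_iff] at hlt
  refine hu.mono fun N ⟨n, hn, hnN, hlt'⟩ => ⟨n, hn, hnN, hlt'.trans_le ?_⟩
  apply Real.rpow_le_rpow_of_exponent_le hb1.le
  nlinarith [Nat.cast_nonneg (α := ℝ) (a N)]

/-! ### The dimension bound -/

theorem stmt5 (b : ℕ) (hb : 2 ≤ b) (a : ℕ → ℕ) (ha : StrictMono a)
    (hpos : ∀ n, 1 ≤ a n) (η : ℝ)
    (hbdd : BddAbove (Set.range fun n => (a (n + 1) : ℝ) / (a n : ℝ)))
    (hη : Filter.limsup (fun n => (a (n + 1) : ℝ) / (a n : ℝ)) atTop = η)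
    (θ w : ℝ) (hθ : 0 < θ) (hw : 0 < w) (hwη : w < η)
    (hθge : max 1 (1 / (η - w)) ≤ θ) :
    dimH {ξ : ℝ | (w : EReal) ≤ vhatbA b a ξ ∧ vbA b a ξ = ((θ * w : ℝ) : EReal)} ≤
      ENNReal.ofReal ((η * θ - 1 - θ * w) / ((η * θ - 1) * (1 + θ * w))) := by
  refine le_of_forall_gt_imp_ge_of_dense fun c hc => ?_
  obtain ⟨s, hs, hsc⟩ := ENNReal.lt_iff_exists_nnreal_btwn.1 hc
  refine le_trans ?_ hsc.le
  have hs' : (η * θ - 1 - θ * w) / ((η * θ - 1) * (1 + θ * w)) < (s : ℝ) := by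
    by_contra! hcon
    refine absurd hs (not_lt.2 ?_)
    simpa using ENNReal.ofReal_le_ofReal hcon
  obtain ⟨ε, α, hε, hεw, hεv, hα, hα1, hlt, hαs⟩ :=
    params_exist hw hwη hθ ((le_max_right _ _).trans hθge) hs'
  have hη0 : 0 < η := hw.trans hwη
  have hθw : 0 < θ * w := mul_pos hθ hw
  obtain ⟨L, hL⟩ := reach_card b hb (κ := (w - ε) / (η + ε)) (U := θ * w + ε) (by linarith) hα hα1 hlt
  -- The pieces `E (N, p)` are indexed by the first element of the chain of records.
  let E : {N : ℕ // L ≤ N} × ℤ → Set ℝ := fun i => {ξ | ∃ᶠ n in atTop, ∃ p : ℤ,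
    Reach b ((w - ε) / (η + ε)) (θ * w + ε) i.1 i.2 n p ∧
      |(b : ℝ) ^ n * ξ - p| ≤ (b : ℝ) ^ (-(n : ℝ) * (θ * w - ε))}
  have hEdim : ∀ i, dimH (E i) ≤ s := by
    intro i
    choose F hF hFc using hL i.1 i.1.2 i.2
    have := dimH_le_of_cover b hb s.coe_nonneg (by linarith) hαs F hFc (E i) fun ξ hξ =>
      hξ.mono fun n ⟨p, hp, hnp⟩ => ⟨p, hF n p hp, hnp⟩
    rwa [ENNReal.ofReal_coe_nnreal] at this
  refine (dimH_mono (t := ⋃ i, E i) ?_).trans ?_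
  swap
  · rw [dimH_iUnion]
    exact iSup_le hEdim
  rintro ξ ⟨h1, h2⟩
  have hlow := vbA_lower h2 hθw.le hε
  have hup := vbA_upper hb h2 hε
  have huni := vhatbA_upper hb h1 hε
  have hgrow : ∀ᶠ n in atTop, (a (n + 1) : ℝ) ≤ (η + ε) * a n := by
    have := eventually_lt_of_limsup_lt (f := atTop)
      (u := fun n => (a (n + 1) : ℝ) / (a n : ℝ)) (b := η + ε) (by rw [hη]; linarith)
      hbdd.isBoundedUnder_of_range
    refine this.mono fun n hn => ?_
    rw [div_lt_iff₀ (by exact_mod_cast hpos n)] at hn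
    exact hn.le
  -- If one distance vanishes then so do all later ones, contradicting the finiteness of `vbA`.
  have hδ : ∀ n, 0 < dni ((b : ℝ) ^ a n * ξ) := by
    intro n
    refine (dni_nonneg _).lt_of_ne fun h0 => ?_
    obtain ⟨m, hm, hnm⟩ := (hlow.and (eventually_ge_atTop n)).exists
    have hle := ha.monotone hnm
    have h3 := dni_mul_pow_eq_zero b (a m - a n) h0.symm
    rw [← mul_assoc, ← pow_add, Nat.sub_add_cancel hle] at h3
    rw [h3] at hm
    have : (0 : ℝ) < b := by positivity
    exact absurd hm (not_le.2 (by positivity))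
  obtain ⟨n₁, hn₁⟩ := eventually_atTop.1 (hlow.and (huni.and hgrow))
  obtain ⟨n₀, hn₀, hrec₀, _⟩ := exists_record b hb ha (by linarith) hδ hup (max n₁ L)
  have hL₀ : L ≤ a n₀ := (le_max_right n₁ L).trans (hn₀.le.trans ha.le_apply)
  have hn₁₀ : n₁ ≤ n₀ := (le_max_left n₁ L).trans hn₀
  refine mem_iUnion.2 ⟨⟨⟨a n₀, hL₀⟩, round ((b : ℝ) ^ a n₀ * ξ)⟩, ?_⟩
  refine frequently_atTop.2 fun K => ?_
  obtain ⟨n, hn, hrec, hnlt⟩ := exists_record b hb ha (by linarith) hδ hup (max n₀ K)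
  refine ⟨a n, (le_max_right n₀ K).trans (hn.le.trans ha.le_apply), round ((b : ℝ) ^ a n * ξ), ?_,
    hnlt.le⟩
  exact reach_of_record b hb ha (by linarith) (by linarith) hrec₀
    (fun k hk => (hn₁ k (hn₁₀.trans hk)).1) (fun k hk => (hn₁ k (hn₁₀.trans hk)).2.1)
    (fun k hk => (hn₁ k (hn₁₀.trans hk)).2.2) ((le_max_left n₀ K).trans hn) hrec
end

section
/- Let θ ≥ max{1, 1/(η − v̂)} and ρ ≥ 0, with 0 < v̂ < η. Then dim_H({ξ ∈ ℝ : v̂_{b,A}(ξ) ≥ v̂ and θv̂ ≤ v_{b,A}(ξ) ≤ θv̂ + ρ}) ≤ (v̂(ηθ − 1 − θv̂) + ρ(η − v̂)) / ((1 + θv̂)((ηθ − 1)v̂ + ηρ)). -/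
/-!
Write `d n = dni (b ^ a n * ξ)` and call `n` a record for `ξ` if `d n < d j` for all `1 ≤ j < n`.

The set is a countable union of pieces on which, with constants independent of `ξ`, the exponents
give three inequalities: `d j < b ^ (-κ * a n)` for some `j < n` when `n` is large, with `κ` close to
`w / η` (the factor `1 / η` is the loss from `a (n - 1)` to `a n`); `d n ≥ c * b ^ (-L * a n)` for
all `n`, with `L` close to `θ w + ρ`; and `d n < b ^ (-u * a n)` infinitely often, with `u` close to
`θ w`. In the last one `n` may be taken to be a record.

The main point is to count the integers `round (b ^ a n * ξ)` arising from records `n`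
(`exists_card_le`). Given a record `n`, the first `j` with `d j < b ^ (-κ * a n)` is an earlier
record, and the nearest integer at `j` leaves at most `6 * b ^ (a n - a j - κ * a n)` choices for the
one at `n`: the `+ 1` in the count of integers is absorbed because the distance to `ℤ` grows by the
exact factor `b` until it passes `1 / 2`, which makes this power larger than `1 / 2`. Moreover
`c * b ^ (-L * a j) ≤ d j < b ^ (-κ * a n)` bounds `a j` below by about `κ * a n / L`. If the count
at `j` is at most `K * b ^ (β * a j)`, summing over `j` gives a count
`O (n * K * b ^ ((1 - κ - (1 - β) * κ / L) * a n))` at `n`, so the bound reproduces itself by strong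
induction as soon as `β > 1 - κ - (1 - β) * κ / L`, the gap absorbing the factor `n ≤ a n`. For the
limiting `κ` and `L` this means `β > 1 - κ / (1 - κ / L)`.

Covering the piece by the intervals of radius `b ^ (-(1 + u) * a n)` around the rationals counted
(`dimH_piece_le`) gives dimension at most any `s` with `β < (1 + u) * s`. Letting all parameters tend
to their limits (`exists_params`) produces the stated bound.
-/


open Filter MeasureTheory Set

lemma dni_le_half (x : ℝ) : dni x ≤ 1 / 2 := abs_sub_round x

/-- As long as `q * dni y < 1 / 2`, the distance to `ℤ` is multiplied exactly by `q`; hence it can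
only decrease under multiplication by `q ≥ 1` after passing `1 / 2`. -/
lemma half_le_of_dni_mul_lt (q : ℤ) (hq : 1 ≤ q) (y : ℝ) (h : dni (q * y) < dni y) :
    1 / 2 ≤ q * dni y := by
  by_contra! hlt
  have hq' : (1 : ℝ) ≤ q := by exact_mod_cast hq
  have habs : |q * y - ((q * round y : ℤ) : ℝ)| = q * dni y := by
    rw [dni, Int.cast_mul, ← mul_sub, abs_mul, abs_of_nonneg (by linarith : (0 : ℝ) ≤ q)]
  by_cases he : round ((q : ℝ) * y) = q * round y
  · have : dni (q * y) = q * dni y := by rw [← habs, ← he, dni]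
    nlinarith [dni_nonneg y]
  · have h1 : (1 : ℝ) ≤ |((q * round y : ℤ) : ℝ) - (round ((q : ℝ) * y) : ℝ)| := by
      have : 1 ≤ |q * round y - round ((q : ℝ) * y)| := Int.one_le_abs (by omega)
      exact_mod_cast this
    have h2 := abs_sub_le ((q * round y : ℤ) : ℝ) (q * y) (round ((q : ℝ) * y) : ℝ)
    rw [abs_sub_comm _ ((q : ℝ) * y), habs] at h2
    have := abs_sub_round ((q : ℝ) * y)
    linarith

lemma exists_finset_int_near (x R : ℝ) (hR : 0 ≤ R) :
    ∃ G : Finset ℤ, (G.card : ℝ) ≤ 2 * R + 1 ∧ ∀ p : ℤ, |(p : ℝ) - x| ≤ R → p ∈ G := by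
  refine ⟨Finset.Icc ⌈x - R⌉ ⌊x + R⌋, ?_, fun p hp => ?_⟩
  · rw [Int.card_Icc]
    have h1 := Int.le_ceil (x - R)
    have h2 := Int.floor_le (x + R)
    have h3 : ((⌊x + R⌋ + 1 - ⌈x - R⌉ : ℤ) : ℝ) ≤ 2 * R + 1 := by push_cast; linarith
    rcases le_total 0 (⌊x + R⌋ + 1 - ⌈x - R⌉) with h | h
    · have : (((⌊x + R⌋ + 1 - ⌈x - R⌉).toNat : ℤ) : ℝ) ≤ 2 * R + 1 := by
        rw [Int.toNat_of_nonneg h]; exact h3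
      exact_mod_cast this
    · rw [Int.toNat_of_nonpos h]; push_cast; linarith
  · rw [abs_le] at hp
    rw [Finset.mem_Icc, Int.ceil_le, Int.le_floor]
    constructor <;> linarith

/-! ### A covering lemma for limsup sets -/

/-- Hausdorff–Cantelli lemma: a limsup set of intervals of radius `r n` centred at the points of
`F n` has dimension at most `s` when the `s`-dimensional sum converges. -/
lemma dimH_le_of_frequently_near (S : Set ℝ) (s : ℝ) (hs : 0 ≤ s) (F : ℕ → Finset ℝ) (r : ℕ → ℝ)
    (hr0 : ∀ n, 0 ≤ r n) (hanti : Antitone r) (hr : Tendsto r atTop (nhds 0))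
    (hsum : Summable fun n => ((F n).card : ℝ) * (2 * r n) ^ s)
    (hcov : ∀ ξ ∈ S, ∃ᶠ n in atTop, ∃ p ∈ F n, |ξ - p| ≤ r n) :
    dimH S ≤ ENNReal.ofReal s := by
  have hdiam : ∀ n p, Metric.ediam (Icc (p - r n) (p + r n)) = ENNReal.ofReal (2 * r n) := by
    intro n p; rw [Real.ediam_Icc]; congr 1; ring
  have key : μH[s] S ≤ liminf (fun N : ℕ => ∑' (i : Σ k : ℕ, F (k + N)),
      Metric.ediam (Icc ((i.2 : ℝ) - r (i.1 + N)) (i.2 + r (i.1 + N))) ^ s) atTop := by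
    refine Measure.hausdorffMeasure_le_liminf_tsum s S
      (fun N => ENNReal.ofReal (2 * r N)) ?_
      (fun N (i : Σ k : ℕ, F (k + N)) => Icc ((i.2 : ℝ) - r (i.1 + N)) (i.2 + r (i.1 + N)))
      ?_ ?_
    · have := ENNReal.tendsto_ofReal (hr.const_mul 2)
      simpa using this
    · refine Eventually.of_forall fun N i => ?_
      rw [hdiam]
      exact ENNReal.ofReal_le_ofReal (by linarith [hanti (Nat.le_add_left N i.1)])
    · refine Eventually.of_forall fun N ξ hξ => ?_
      obtain ⟨n, hn, p, hp, hd⟩ := (frequently_atTop.1 (hcov ξ hξ)) N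
      obtain ⟨k, rfl⟩ := Nat.exists_eq_add_of_le' hn
      refine mem_iUnion.2 ⟨⟨k, ⟨p, hp⟩⟩, ?_⟩
      rw [abs_le] at hd
      constructor <;> dsimp only <;> linarith
  have htail : Tendsto (fun N : ℕ => ∑' (i : Σ k : ℕ, F (k + N)),
      Metric.ediam (Icc ((i.2 : ℝ) - r (i.1 + N)) (i.2 + r (i.1 + N))) ^ s) atTop (nhds 0) := by
    have h := ENNReal.tendsto_sum_nat_add
      (fun n => ENNReal.ofReal (((F n).card : ℝ) * (2 * r n) ^ s)) hsum.tsum_ofReal_ne_top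
    refine h.congr fun N => ?_
    rw [ENNReal.tsum_sigma (fun k (p : F (k + N)) =>
      Metric.ediam (Icc ((p : ℝ) - r (k + N)) (p + r (k + N))) ^ s)]
    refine tsum_congr fun k => ?_
    simp only [hdiam]
    rw [tsum_fintype, Finset.sum_const, Finset.card_univ, Fintype.card_coe, nsmul_eq_mul,
      ENNReal.ofReal_mul (by positivity), ENNReal.ofReal_natCast,
      ENNReal.ofReal_rpow_of_nonneg (by linarith [hr0 (k + N)]) hs]
  rw [htail.liminf_eq] at key
  have h0 : μH[((s.toNNReal : NNReal) : ℝ)] S ≠ ⊤ := by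
    rw [Real.coe_toNNReal s hs]
    exact ne_top_of_le_ne_top ENNReal.zero_ne_top key
  exact dimH_le_of_hausdorffMeasure_ne_top h0

/-! ### Record indices -/

/-- The index `n` is a *record* for `ξ`: `b ^ a n * ξ` is strictly closer to an integer than
every `b ^ a j * ξ` with `1 ≤ j < n`. -/
def IsRec (b : ℕ) (a : ℕ → ℕ) (ξ : ℝ) (n : ℕ) : Prop :=
  ∀ j, 1 ≤ j → j < n → dni ((b : ℝ) ^ (a n) * ξ) < dni ((b : ℝ) ^ (a j) * ξ)

/-- The first index at which the distance drops below `ε` is a record. -/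
lemma exists_isRec_lt (b : ℕ) (a : ℕ → ℕ) (ξ ε : ℝ)
    (h : ∃ j, 1 ≤ j ∧ dni ((b : ℝ) ^ (a j) * ξ) < ε) :
    ∃ j, 1 ≤ j ∧ dni ((b : ℝ) ^ (a j) * ξ) < ε ∧ IsRec b a ξ j ∧
      ∀ i, 1 ≤ i → dni ((b : ℝ) ^ (a i) * ξ) < ε → j ≤ i := by
  classical
  refine ⟨Nat.find h, (Nat.find_spec h).1, (Nat.find_spec h).2, fun i hi hij => ?_,
    fun i hi hlt => Nat.find_min' h ⟨hi, hlt⟩⟩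
  have := Nat.find_min h hij
  push Not at this
  exact (Nat.find_spec h).2.trans_le (this hi)

/-- Separation of records: after a distance below `δ` at the index `j`, a new record can only occur
at an index `n` with `b ^ (a n - a j) * δ > 1 / 2`. -/
lemma half_lt_of_isRec (b : ℕ) (hb : 2 ≤ b) (a : ℕ → ℕ) (ha : StrictMono a) (ξ δ : ℝ) (j n : ℕ)
    (hj : 1 ≤ j) (hjn : j < n) (hd : dni ((b : ℝ) ^ (a j) * ξ) < δ) (hn : IsRec b a ξ n) :
    1 / 2 < (b : ℝ) ^ (a n - a j) * δ := by
  have hb0 : (0 : ℝ) < b := by exact_mod_cast (by omega : 0 < b)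
  have e : (b : ℝ) ^ (a n) * ξ = (((b : ℤ) ^ (a n - a j) : ℤ) : ℝ) * ((b : ℝ) ^ (a j) * ξ) := by
    push_cast
    rw [← mul_assoc, ← pow_add, Nat.sub_add_cancel (ha hjn).le]
  have h := hn j hj hjn
  rw [e] at h
  have h2 := half_le_of_dni_mul_lt _ (one_le_pow₀ (by omega)) _ h
  push_cast at h2
  exact h2.trans_lt (mul_lt_mul_of_pos_left hd (by positivity))

/-- Knowing the nearest integer at the index `j` and `dni (b ^ a j * ξ) < δ` confines the nearest
integer at a later index `n` to a short interval. -/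
lemma round_near (b : ℕ) (a : ℕ → ℕ) (ha : StrictMono a) (ξ δ : ℝ) (j n : ℕ)
    (hjn : j < n) (hd : dni ((b : ℝ) ^ (a j) * ξ) < δ) :
    |(round ((b : ℝ) ^ (a n) * ξ) : ℝ) - (b : ℝ) ^ (a n - a j) * round ((b : ℝ) ^ (a j) * ξ)| ≤
      (b : ℝ) ^ (a n - a j) * δ + 1 / 2 := by
  have e : (b : ℝ) ^ (a n) * ξ = (b : ℝ) ^ (a n - a j) * ((b : ℝ) ^ (a j) * ξ) := by
    rw [← mul_assoc, ← pow_add, Nat.sub_add_cancel (ha hjn).le]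
  have h1 := dni_le_half ((b : ℝ) ^ (a n) * ξ)
  rw [dni] at h1
  have h2 : |(b : ℝ) ^ (a n) * ξ - (b : ℝ) ^ (a n - a j) * round ((b : ℝ) ^ (a j) * ξ)| ≤
      (b : ℝ) ^ (a n - a j) * δ := by
    rw [e, ← mul_sub, abs_mul, abs_of_nonneg (by positivity : (0 : ℝ) ≤ (b : ℝ) ^ (a n - a j))]
    exact mul_le_mul_of_nonneg_left hd.le (by positivity)
  rw [abs_sub_comm] at h1
  have := abs_sub_le (round ((b : ℝ) ^ (a n) * ξ) : ℝ) ((b : ℝ) ^ (a n) * ξ)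
    ((b : ℝ) ^ (a n - a j) * round ((b : ℝ) ^ (a j) * ξ))
  linarith

/-! ### Counting nearest integers at records -/

lemma eventually_mul_rpow_le_one (b : ℕ) (hb : 2 ≤ b) (a : ℕ → ℕ) (ha : StrictMono a) (C g : ℝ)
    (hg : 0 < g) : ∀ᶠ n in atTop, C * (a n : ℝ) * (b : ℝ) ^ (-g * (a n : ℝ)) ≤ 1 := by
  have hb1 : (1 : ℝ) < b := by exact_mod_cast (by omega : 1 < b)
  have h := tendsto_self_mul_const_pow_of_lt_one (r := (b : ℝ) ^ (-g)) (by positivity)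
    (Real.rpow_lt_one_of_one_lt_of_neg hb1 (by linarith))
  have h2 := ((h.comp ha.tendsto_atTop).const_mul C)
  rw [mul_zero] at h2
  filter_upwards [h2.eventually (ge_mem_nhds one_pos)] with n hn
  simp only [Function.comp] at hn
  rw [Real.rpow_mul (by positivity), Real.rpow_natCast, mul_assoc]
  exact hn

/-- Exponent bookkeeping for one step of the recursion, with `x = a n` and `y = a j`: the hypothesis
bounds `y` below by about `κ x / L`, so the contribution of `j` is smaller than the target
`B ^ (β * x)` by the factor `B ^ (-g * x)`, where `g` is the gap in the inequality on `β`. -/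
lemma exponent_step (B κ L β c x y : ℝ) (hB : 1 < B) (hL : 0 < L) (hβ1 : β ≤ 1) (hc : 0 < c)
    (h : c * B ^ (-L * y) < B ^ (-κ * x)) :
    B ^ (β * y) * (B ^ (x - y) * B ^ (-κ * x)) ≤
      (1 / c) ^ ((1 - β) / L) * B ^ (-(β - (1 - κ - (1 - β) * κ / L)) * x) * B ^ (β * x) := by
  have hB0 : 0 < B := by linarith
  have h1 : B ^ (κ * x - L * y) ≤ 1 / c := by
    rw [le_div_iff₀ hc]
    have : B ^ (κ * x - L * y) * c = (c * B ^ (-L * y)) * B ^ (κ * x) := by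
      rw [mul_assoc, ← Real.rpow_add hB0, mul_comm]; congr 2; ring
    rw [this]
    calc (c * B ^ (-L * y)) * B ^ (κ * x) ≤ B ^ (-κ * x) * B ^ (κ * x) := by gcongr
      _ = 1 := by rw [← Real.rpow_add hB0]; simp
  have h2 := Real.rpow_le_rpow (by positivity) h1
    (div_nonneg (by linarith : 0 ≤ 1 - β) hL.le)
  rw [← Real.rpow_mul hB0.le] at h2
  rw [mul_assoc, ← Real.rpow_add hB0, ← Real.rpow_add hB0, ← Real.rpow_add hB0]
  calc B ^ (β * y + (x - y + -κ * x))
      = B ^ ((κ * x - L * y) * ((1 - β) / L)) *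
          B ^ (-(β - (1 - κ - (1 - β) * κ / L)) * x + β * x) := by
        rw [← Real.rpow_add hB0]; congr 1; field_simp; ring
    _ ≤ _ := by gcongr

/-- The counting step. Let `T` be a bounded set of `ξ` with a uniform approximation property of
exponent `κ` (from the index `m` on) and no approximation better than exponent `L`. For every `β` in
`[0, 1]` with `1 - κ - (1 - β) * κ / L < β` there is `K` such that, for each `n`, at most
`K * b ^ (β * a n)` integers occur as the nearest integer of `b ^ a n * ξ` with `ξ ∈ T` and `n` a
record for `ξ`. -/
lemma exists_card_le (b : ℕ) (hb : 2 ≤ b) (a : ℕ → ℕ) (ha : StrictMono a)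
    (κ L β c M : ℝ) (hL : 0 < L) (hβ0 : 0 ≤ β) (hβ1 : β ≤ 1)
    (hβ : 1 - κ - (1 - β) * κ / L < β) (hc : 0 < c) (hM0 : 0 ≤ M) (m : ℕ) (T : Set ℝ)
    (hM : ∀ ξ ∈ T, |ξ| ≤ M)
    (hU : ∀ ξ ∈ T, ∀ n, m ≤ n → ∃ j, 1 ≤ j ∧ j < n ∧
      dni ((b : ℝ) ^ (a j) * ξ) < (b : ℝ) ^ (-κ * (a n : ℝ)))
    (hLo : ∀ ξ ∈ T, ∀ n, 1 ≤ n → c * (b : ℝ) ^ (-L * (a n : ℝ)) ≤ dni ((b : ℝ) ^ (a n) * ξ)) :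
    ∃ K : ℝ, 0 ≤ K ∧ ∀ n, ∃ F : Finset ℤ, (F.card : ℝ) ≤ K * (b : ℝ) ^ (β * (a n : ℝ)) ∧
      ∀ ξ ∈ T, IsRec b a ξ n → round ((b : ℝ) ^ (a n) * ξ) ∈ F := by
  classical
  have hb1 : (1 : ℝ) < b := by exact_mod_cast (by omega : 1 < b)
  have hb0 : (0 : ℝ) < b := by linarith
  set g := β - (1 - κ - (1 - β) * κ / L) with hg
  set C := (1 / c) ^ ((1 - β) / L) with hC
  have hC0 : 0 ≤ C := by positivity
  obtain ⟨N, hN⟩ := eventually_atTop.1 (eventually_mul_rpow_le_one b hb a ha (6 * C) g (by linarith))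
  -- the trivial count from `|ξ| ≤ M`, used for the finitely many small indices
  have hbase : ∀ n, ∃ F : Finset ℤ, ∀ ξ ∈ T, round ((b : ℝ) ^ (a n) * ξ) ∈ F := by
    intro n
    obtain ⟨G, -, hG⟩ := exists_finset_int_near 0 ((b : ℝ) ^ (a n) * M + 1 / 2) (by positivity)
    refine ⟨G, fun ξ hξ => hG _ ?_⟩
    have h1 := abs_sub_round ((b : ℝ) ^ (a n) * ξ)
    rw [abs_sub_comm] at h1
    have h2 : |(b : ℝ) ^ (a n) * ξ| ≤ (b : ℝ) ^ (a n) * M := by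
      rw [abs_mul, abs_of_pos (by positivity)]
      exact mul_le_mul_of_nonneg_left (hM ξ hξ) (by positivity)
    have h3 := abs_sub_le (round ((b : ℝ) ^ (a n) * ξ) : ℝ) ((b : ℝ) ^ (a n) * ξ) 0
    rw [sub_zero ((b : ℝ) ^ (a n) * ξ)] at h3
    linarith
  choose F0 hF0 using hbase
  set K : ℝ := ∑ n ∈ Finset.range (max m N), ((F0 n).card : ℝ) with hK
  have hK0 : 0 ≤ K := Finset.sum_nonneg fun i _ => Nat.cast_nonneg _
  clear_value K C g
  refine ⟨K, hK0, fun n => ?_⟩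
  induction n using Nat.strong_induction_on with
  | _ n ih =>
    by_cases hn : n < max m N
    · refine ⟨F0 n, ?_, fun ξ hξ _ => hF0 n ξ hξ⟩
      have h1 : ((F0 n).card : ℝ) ≤ K := hK ▸
        Finset.single_le_sum (f := fun n => ((F0 n).card : ℝ)) (fun i _ => Nat.cast_nonneg _)
          (Finset.mem_range.2 hn)
      have h2 : (1 : ℝ) ≤ (b : ℝ) ^ (β * (a n : ℝ)) :=
        Real.one_le_rpow hb1.le (by positivity)
      nlinarith
    · push Not at hn
      obtain ⟨hnm, hnN⟩ := max_le_iff.1 hn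
      choose! Fj hFc hFm using ih
      set E : ℕ → ℝ := fun j => (b : ℝ) ^ (a n - a j) * (b : ℝ) ^ (-κ * (a n : ℝ)) with hE
      have hE0 : ∀ j, 0 ≤ E j := fun j =>
        mul_nonneg (pow_nonneg hb0.le _) (Real.rpow_nonneg hb0.le _)
      choose G hGc hGm using fun (j : ℕ) (p : ℤ) =>
        exists_finset_int_near ((b : ℝ) ^ (a n - a j) * p) (E j + 1 / 2) (by linarith [hE0 j])
      -- `J`: the indices compatible with separation of records and with the lower bound `hLo`
      set J := (Finset.range n).filter fun j => 1 / 2 < E j ∧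
        c * (b : ℝ) ^ (-L * (a j : ℝ)) < (b : ℝ) ^ (-κ * (a n : ℝ)) with hJ
      refine ⟨J.biUnion fun j => (Fj j).biUnion (G j), ?_, fun ξ hξ hrec => ?_⟩
      · have hterm : ∀ j ∈ J, ((((Fj j).biUnion (G j)).card : ℕ) : ℝ) ≤
            K * (6 * (C * (b : ℝ) ^ (-g * (a n : ℝ)) * (b : ℝ) ^ (β * (a n : ℝ)))) := by
          intro j hj
          rw [hJ, Finset.mem_filter, Finset.mem_range] at hj
          obtain ⟨hjn, hEj, hcj⟩ := hj
          have hstep := exponent_step b κ L β c (a n) (a j) hb1 hL hβ1 hc hcj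
          have hEe : (b : ℝ) ^ ((a n : ℝ) - (a j : ℝ)) * (b : ℝ) ^ (-κ * (a n : ℝ)) = E j := by
            rw [hE, ← Nat.cast_sub (ha hjn).le, Real.rpow_natCast]
          rw [hEe, ← hC, ← hg] at hstep
          calc ((((Fj j).biUnion (G j)).card : ℕ) : ℝ)
              ≤ ((∑ p ∈ Fj j, (G j p).card : ℕ) : ℝ) := by exact_mod_cast Finset.card_biUnion_le
            _ = ∑ p ∈ Fj j, ((G j p).card : ℝ) := by push_cast; rfl
            _ ≤ ∑ p ∈ Fj j, 6 * E j :=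
                Finset.sum_le_sum fun p _ => (hGc j p).trans (by linarith)
            _ = (Fj j).card * (6 * E j) := by rw [Finset.sum_const, nsmul_eq_mul]
            _ ≤ (K * (b : ℝ) ^ (β * (a j : ℝ))) * (6 * E j) :=
                mul_le_mul_of_nonneg_right (hFc j hjn) (by linarith)
            _ = K * (6 * ((b : ℝ) ^ (β * (a j : ℝ)) * E j)) := by ring
            _ ≤ _ := mul_le_mul_of_nonneg_left
                (mul_le_mul_of_nonneg_left hstep (by norm_num)) hK0
        have hJc : (J.card : ℝ) ≤ a n := by
          have h1 : J.card ≤ n := (Finset.card_filter_le _ _).trans (by simp)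
          exact_mod_cast h1.trans (ha.le_apply)
        have hNn := hN n hnN
        calc (((J.biUnion fun j => (Fj j).biUnion (G j)).card : ℕ) : ℝ)
            ≤ ((∑ j ∈ J, ((Fj j).biUnion (G j)).card : ℕ) : ℝ) := by
              exact_mod_cast Finset.card_biUnion_le
          _ = ∑ j ∈ J, (((Fj j).biUnion (G j)).card : ℝ) := by push_cast; rfl
          _ ≤ ∑ j ∈ J, K * (6 * (C * (b : ℝ) ^ (-g * (a n : ℝ)) * (b : ℝ) ^ (β * (a n : ℝ)))) :=
              Finset.sum_le_sum hterm
          _ = J.card * (K * (6 * (C * (b : ℝ) ^ (-g * (a n : ℝ)) *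
                (b : ℝ) ^ (β * (a n : ℝ))))) := by rw [Finset.sum_const, nsmul_eq_mul]
          _ ≤ a n * (K * (6 * (C * (b : ℝ) ^ (-g * (a n : ℝ)) *
                (b : ℝ) ^ (β * (a n : ℝ))))) := by gcongr
          _ = (6 * C * a n * (b : ℝ) ^ (-g * (a n : ℝ))) * (K * (b : ℝ) ^ (β * (a n : ℝ))) := by
              ring
          _ ≤ 1 * (K * (b : ℝ) ^ (β * (a n : ℝ))) := by gcongr
          _ = _ := one_mul _
      -- the predecessor of the record `n` is the first index with distance below `b ^ (-κ * a n)`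
      · obtain ⟨i, hi1, hin, hid⟩ := hU ξ hξ n hnm
        obtain ⟨j, hj1, hjd, hjrec, hjmin⟩ := exists_isRec_lt b a ξ _ ⟨i, hi1, hid⟩
        have hjn : j < n := (hjmin i hi1 hid).trans_lt hin
        refine Finset.mem_biUnion.2 ⟨j, ?_, Finset.mem_biUnion.2
          ⟨_, hFm j hjn ξ hξ hjrec, hGm j _ _ (round_near b a ha ξ _ j n hjn hjd)⟩⟩
        rw [hJ, Finset.mem_filter, Finset.mem_range]
        exact ⟨hjn, half_lt_of_isRec b hb a ha ξ _ j n hj1 hjn hjd hrec,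
          (hLo ξ hξ j hj1).trans_lt hjd⟩

/-! ### Dimension of one piece -/

/-- Dimension bound for a single piece `T`: the points of `T` are infinitely often, at record
indices `n`, within `b ^ (-(1 + u) * a n)` of one of the `K * b ^ (β * a n)` rationals counted in
`exists_card_le`, and the resulting `s`-dimensional sum converges once `β < (1 + u) * s`. -/
lemma dimH_piece_le (b : ℕ) (hb : 2 ≤ b) (a : ℕ → ℕ) (ha : StrictMono a)
    (κ L β c M u s : ℝ) (hL : 0 < L) (hβ0 : 0 ≤ β) (hβ1 : β ≤ 1)
    (hβ : 1 - κ - (1 - β) * κ / L < β) (hc : 0 < c) (hM0 : 0 ≤ M) (hu : 0 < u) (hs : 0 ≤ s)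
    (hβs : β < (1 + u) * s) (m : ℕ) (T : Set ℝ)
    (hM : ∀ ξ ∈ T, |ξ| ≤ M)
    (hU : ∀ ξ ∈ T, ∀ n, m ≤ n → ∃ j, 1 ≤ j ∧ j < n ∧
      dni ((b : ℝ) ^ (a j) * ξ) < (b : ℝ) ^ (-κ * (a n : ℝ)))
    (hLo : ∀ ξ ∈ T, ∀ n, 1 ≤ n → c * (b : ℝ) ^ (-L * (a n : ℝ)) ≤ dni ((b : ℝ) ^ (a n) * ξ))
    (hV : ∀ ξ ∈ T, ∃ᶠ n in atTop, 1 ≤ n ∧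
      dni ((b : ℝ) ^ (a n) * ξ) < (b : ℝ) ^ (-u * (a n : ℝ))) :
    dimH T ≤ ENNReal.ofReal s := by
  classical
  have hb1 : (1 : ℝ) < b := by exact_mod_cast (by omega : 1 < b)
  have hb0 : (0 : ℝ) < b := by linarith
  obtain ⟨K, hK0, hK⟩ := exists_card_le b hb a ha κ L β c M hL hβ0 hβ1 hβ hc hM0 m T hM hU hLo
  choose F hFc hFm using hK
  have hpow : ∀ g : ℝ, 0 < g → Summable fun n => (b : ℝ) ^ (-g * (a n : ℝ)) := by
    intro g hg
    have hlt : (b : ℝ) ^ (-g) < 1 := Real.rpow_lt_one_of_one_lt_of_neg hb1 (by linarith)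
    refine Summable.of_nonneg_of_le (fun n => by positivity) (fun n => ?_)
      (summable_geometric_of_lt_one (by positivity) hlt)
    rw [Real.rpow_mul hb0.le, Real.rpow_natCast]
    exact pow_le_pow_of_le_one (by positivity) hlt.le ha.le_apply
  refine dimH_le_of_frequently_near T s hs
    (fun n => (F n).image fun p : ℤ => (p : ℝ) / (b : ℝ) ^ (a n))
    (fun n => (b : ℝ) ^ (-(1 + u) * (a n : ℝ))) (fun n => by positivity) ?_
    (hpow (1 + u) (by linarith)).tendsto_atTop_zero ?_ ?_
  · intro i j hij
    refine Real.rpow_le_rpow_of_exponent_le hb1.le ?_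
    have : (a i : ℝ) ≤ a j := by exact_mod_cast ha.monotone hij
    nlinarith
  · refine Summable.of_nonneg_of_le (fun n => by positivity) (fun n => ?_)
      ((hpow ((1 + u) * s - β) (by linarith)).mul_left (K * 2 ^ s))
    have h1 : (((F n).image fun p : ℤ => (p : ℝ) / (b : ℝ) ^ (a n)).card : ℝ) ≤
        K * (b : ℝ) ^ (β * (a n : ℝ)) :=
      le_trans (by exact_mod_cast Finset.card_image_le) (hFc n)
    calc _ ≤ K * (b : ℝ) ^ (β * (a n : ℝ)) * (2 * (b : ℝ) ^ (-(1 + u) * (a n : ℝ))) ^ s := by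
          gcongr
      _ = K * 2 ^ s * ((b : ℝ) ^ (β * (a n : ℝ)) * (b : ℝ) ^ (-(1 + u) * (a n : ℝ) * s)) := by
          rw [Real.mul_rpow (by norm_num) (by positivity), ← Real.rpow_mul hb0.le]; ring
      _ = _ := by rw [← Real.rpow_add hb0]; congr 2; ring
  · intro ξ hξ
    rw [frequently_atTop]
    intro X
    -- distances at indices below `X` stay above `ε`, so a smaller one forces a record beyond `X`
    obtain ⟨ε, hε, hεX⟩ : ∃ ε > 0, ∀ j, 1 ≤ j → j < X → ε ≤ dni ((b : ℝ) ^ (a j) * ξ) := by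
      refine ⟨c * (b : ℝ) ^ (-L * (a X : ℝ)), by positivity, fun j hj hjX =>
        le_trans ?_ (hLo ξ hξ j hj)⟩
      have : (a j : ℝ) ≤ a X := by exact_mod_cast (ha hjX).le
      have : -L * (a X : ℝ) ≤ -L * (a j : ℝ) := by nlinarith
      gcongr
      exact hb1.le
    obtain ⟨n, ⟨hn1, hnd⟩, hnε⟩ := ((hV ξ hξ).and_eventually
      ((hpow u hu).tendsto_atTop_zero.eventually (gt_mem_nhds hε))).exists
    obtain ⟨j, hj1, hjd, hjrec, hjmin⟩ := exists_isRec_lt b a ξ _ ⟨n, hn1, hnd⟩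
    have hXj : X ≤ j := by
      by_contra! hlt
      linarith [hεX j hj1 hlt]
    have hjn : (a j : ℝ) ≤ a n := by exact_mod_cast ha.monotone (hjmin n hn1 hnd)
    have hjd' : dni ((b : ℝ) ^ (a j) * ξ) ≤ (b : ℝ) ^ (-u * (a j : ℝ)) :=
      hjd.le.trans (Real.rpow_le_rpow_of_exponent_le hb1.le (by nlinarith))
    refine ⟨j, hXj, _, Finset.mem_image_of_mem _ (hFm j ξ hξ hjrec), ?_⟩
    have e : ξ - (round ((b : ℝ) ^ (a j) * ξ) : ℝ) / (b : ℝ) ^ (a j) =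
        ((b : ℝ) ^ (a j) * ξ - round ((b : ℝ) ^ (a j) * ξ)) / (b : ℝ) ^ (a j) := by
      field_simp
    rw [e, abs_div, abs_of_pos (by positivity : (0 : ℝ) < (b : ℝ) ^ (a j)), ← dni,
      div_le_iff₀ (by positivity), ← Real.rpow_natCast (b : ℝ) (a j), ← Real.rpow_add hb0,
      Real.rpow_natCast]
    refine hjd'.trans_eq ?_
    congr 1; ring

/-! ### Choice of exponents -/

/-- The auxiliary exponents: for `s` above the claimed bound there are `η' > η`, `v < w`,
`L > θ * w + ρ`, `u < θ * w` and `β` satisfying the strict inequalities of `dimH_piece_le` with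
`κ = v / η'`. -/
lemma exists_params (η θ w ρ s : ℝ) (hw : 0 < w) (hwη : w < η) (hρ : 0 ≤ ρ)
    (hθ1 : 1 ≤ θ) (hθ : 1 ≤ θ * (η - w))
    (hs : (w * (η * θ - 1 - θ * w) + ρ * (η - w)) /
        ((1 + θ * w) * ((η * θ - 1) * w + η * ρ)) < s) :
    ∃ η' v L u β : ℝ, η < η' ∧ 0 < v ∧ v < w ∧ θ * w + ρ < L ∧ 0 < u ∧ u < θ * w ∧
      0 ≤ β ∧ β ≤ 1 ∧ 1 - v / η' - (1 - β) * (v / η') / L < β ∧ β < (1 + u) * s := by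
  have hη : 0 < η := hw.trans hwη
  have hθw : 0 < θ * w := by positivity
  have hL0 : 0 < θ * w + ρ := by linarith
  have hden : 0 < (η * θ - 1) * w + η * ρ := by
    have : 0 < η * θ - 1 := by nlinarith
    positivity
  have hnum : 0 ≤ w * (η * θ - 1 - θ * w) + ρ * (η - w) := by
    have h1 : 0 ≤ η * θ - 1 - θ * w := by nlinarith
    have h2 : 0 ≤ η - w := by linarith
    positivity
  set D := (w * (η * θ - 1 - θ * w) + ρ * (η - w)) / ((η * θ - 1) * w + η * ρ) with hD
  have hD0 : 0 ≤ D := div_nonneg hnum hden.le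
  have hD1 : D < 1 := by
    rw [hD, div_lt_one hden]; nlinarith
  -- `D` is the fixed point of `β ↦ 1 - κ - (1 - β) κ / L` at `κ = w / η`, `L = θ w + ρ`
  have hfix : 1 - w / η - (1 - D) * (w / η) / (θ * w + ρ) = D := by
    have : 1 - D = w * (θ * w + ρ) / ((η * θ - 1) * w + η * ρ) := by
      rw [hD, eq_div_iff hden.ne', sub_mul, div_mul_cancel₀ _ hden.ne']; ring
    have h2 : D = 1 - w * (θ * w + ρ) / ((η * θ - 1) * w + η * ρ) := by linarith
    have hP : (η * θ - 1) * w + η * ρ = η * (θ * w + ρ) - w := by ring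
    rw [this, h2]
    rw [hP] at hden ⊢
    have e : 1 - w / η - w * (θ * w + ρ) / (η * (θ * w + ρ) - w) * (w / η) / (θ * w + ρ) -
        (1 - w * (θ * w + ρ) / (η * (θ * w + ρ) - w)) = 0 := by
      generalize θ * w + ρ = W at hden hL0 ⊢
      have := hden.ne'
      field_simp
      ring
    linarith
  have hDs : D < (1 + θ * w) * s := by
    rw [mul_comm (1 + θ * w), ← div_div, ← hD, div_lt_iff₀ (by linarith)] at hs
    linarith
  obtain ⟨β, hβ1, hβ2⟩ := exists_between (lt_min hD1 hDs)
  obtain ⟨hβ3, hβ4⟩ := lt_min_iff.1 hβ2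
  have hr : w / η / (θ * w + ρ) < 1 := by
    rw [div_div, div_lt_one (by positivity)]; nlinarith
  have hβ5 : 1 - w / η - (1 - β) * (w / η) / (θ * w + ρ) < β := by
    have e : 1 - w / η - (1 - β) * (w / η) / (θ * w + ρ) =
        (1 - w / η - (1 - D) * (w / η) / (θ * w + ρ)) +
          (β - D) * (w / η / (θ * w + ρ)) := by ring
    rw [e, hfix]
    nlinarith
  -- all conditions are open, so they persist under a perturbation by a small `t > 0`
  have hc1 : ContinuousAt (fun t : ℝ => 1 - (w - t) / (η + t) -
      (1 - β) * ((w - t) / (η + t)) / (θ * w + ρ + t)) 0 := by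
    refine ContinuousAt.sub (ContinuousAt.sub continuousAt_const ?_) (ContinuousAt.div ?_ ?_ ?_)
    · exact ContinuousAt.div (by fun_prop) (by fun_prop) (by simpa using hη.ne')
    · exact continuousAt_const.mul
        (ContinuousAt.div (by fun_prop) (by fun_prop) (by simpa using hη.ne'))
    · fun_prop
    · simpa using hL0.ne'
  have hc2 : ContinuousAt (fun t : ℝ => (1 + (θ * w - t)) * s) 0 := by fun_prop
  have he1 := hc1.eventually_lt (continuousAt_const (y := β)) (by simpa using hβ5)
  have he2 := (continuousAt_const (y := β)).eventually_lt hc2 (by simpa using hβ4)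
  have he3 : ∀ᶠ t : ℝ in nhds 0, t < w := gt_mem_nhds hw
  have he4 : ∀ᶠ t : ℝ in nhds 0, t < θ * w := gt_mem_nhds hθw
  obtain ⟨t, ⟨⟨h1, h2⟩, h3, h4⟩, ht⟩ :=
    (((((he1.and he2).and (he3.and he4)).filter_mono nhdsWithin_le_nhds).and
      (self_mem_nhdsWithin : Ioi (0 : ℝ) ∈ nhdsWithin 0 (Ioi 0)))).exists
  exact ⟨η + t, w - t, θ * w + ρ + t, θ * w - t, β, by linarith, by linarith, by linarith,
    by linarith, by linarith, by linarith, by linarith, hβ3.le, h1, h2⟩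

/-! ### From the exponents to explicit inequalities -/

lemma uniform_of_lt_vhatbA (b : ℕ) (hb : 2 ≤ b) (a : ℕ → ℕ) (ξ v : ℝ)
    (h : (v : EReal) < vhatbA b a ξ) :
    ∀ᶠ N in atTop, ∃ n, 1 ≤ n ∧ n ≤ N ∧
      dni ((b : ℝ) ^ (a n) * ξ) < (b : ℝ) ^ (-(a N : ℝ) * v) := by
  have hb1 : (1 : ℝ) ≤ b := by exact_mod_cast (by omega : 1 ≤ b)
  obtain ⟨_, ⟨v', ⟨-, hv'⟩, rfl⟩, hlt⟩ := lt_sSup_iff.1 h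
  have hlt' : v < v' := EReal.coe_lt_coe_iff.1 hlt
  filter_upwards [hv'] with N ⟨n, h1, h2, h3⟩
  refine ⟨n, h1, h2, h3.trans_le (Real.rpow_le_rpow_of_exponent_le hb1 ?_)⟩
  nlinarith [Nat.cast_nonneg (α := ℝ) (a N)]

lemma frequently_of_lt_vbA (b : ℕ) (hb : 2 ≤ b) (a : ℕ → ℕ) (ξ u : ℝ)
    (h : (u : EReal) < vbA b a ξ) :
    ∃ᶠ n in atTop, 1 ≤ n ∧ dni ((b : ℝ) ^ (a n) * ξ) < (b : ℝ) ^ (-u * (a n : ℝ)) := by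
  have hb1 : (1 : ℝ) ≤ b := by exact_mod_cast (by omega : 1 ≤ b)
  obtain ⟨_, ⟨u', ⟨-, hu'⟩, rfl⟩, hlt⟩ := lt_sSup_iff.1 h
  have hlt' : u < u' := EReal.coe_lt_coe_iff.1 hlt
  refine hu'.mono fun n ⟨h1, h2⟩ =>
    ⟨h1, h2.trans_le (Real.rpow_le_rpow_of_exponent_le hb1 ?_)⟩
  nlinarith [Nat.cast_nonneg (α := ℝ) (a n)]

lemma eventually_of_vbA_lt (b : ℕ) (a : ℕ → ℕ) (ξ L : ℝ) (hL : 0 ≤ L)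
    (h : vbA b a ξ < (L : EReal)) :
    ∀ᶠ n in atTop, (b : ℝ) ^ (-L * (a n : ℝ)) ≤ dni ((b : ℝ) ^ (a n) * ξ) := by
  by_contra hcon
  rw [not_eventually] at hcon
  have hmem : (L : EReal) ≤ vbA b a ξ := by
    refine le_sSup ⟨L, ⟨hL, ?_⟩, rfl⟩
    refine (hcon.and_eventually (eventually_ge_atTop 1)).mono fun n ⟨h1, h2⟩ => ⟨h2, ?_⟩
    rw [not_le] at h1
    rwa [neg_mul, mul_comm L, ← neg_mul] at h1
  exact absurd h hmem.not_gt

/-- The eventual lower bound holds at every index `n ≥ 1` up to a constant. No distance vanishes,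
because `b ^ a n * ξ ∈ ℤ` would make all later distances vanish as well. -/
lemma exists_const_of_vbA_lt (b : ℕ) (hb : 2 ≤ b) (a : ℕ → ℕ) (ha : StrictMono a) (ξ L : ℝ)
    (hL : 0 ≤ L) (h : vbA b a ξ < (L : EReal)) :
    ∃ c > 0, ∀ n, c * (b : ℝ) ^ (-L * (a n : ℝ)) ≤ dni ((b : ℝ) ^ (a n) * ξ) := by
  have hb1 : (1 : ℝ) ≤ b := by exact_mod_cast (by omega : 1 ≤ b)
  have hb0 : (0 : ℝ) < b := by linarith
  obtain ⟨N, hN⟩ := eventually_atTop.1 (eventually_of_vbA_lt b a ξ L hL h)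
  have hpos : ∀ n, 0 < dni ((b : ℝ) ^ (a n) * ξ) := by
    intro n
    refine (dni_nonneg _).lt_of_ne' fun h0 => ?_
    set k := max n N + 1
    have hk : n < k := by omega
    have h2 : 0 < dni ((b : ℝ) ^ (a k) * ξ) :=
      lt_of_lt_of_le (by positivity) (hN k (by omega))
    have e : (b : ℝ) ^ (a k) * ξ =
        (((b : ℤ) ^ (a k - a n) * round ((b : ℝ) ^ (a n) * ξ) : ℤ) : ℝ) := by
      rw [dni, abs_eq_zero, sub_eq_zero] at h0
      push_cast
      rw [← h0, ← mul_assoc, ← pow_add, Nat.sub_add_cancel (ha hk).le]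
    rw [e, dni, round_intCast, sub_self, abs_zero] at h2
    exact lt_irrefl _ h2
  have hev : ∀ᶠ c : ℝ in nhds 0, ∀ n ∈ Finset.range N, c < dni ((b : ℝ) ^ (a n) * ξ) :=
    (Finset.eventually_all _).2 fun n _ => gt_mem_nhds (hpos n)
  obtain ⟨c, ⟨hc1, hc2⟩, hc0⟩ :=
    (((hev.and (gt_mem_nhds one_pos)).filter_mono nhdsWithin_le_nhds).and
      (self_mem_nhdsWithin : Ioi (0 : ℝ) ∈ nhdsWithin 0 (Ioi 0))).exists
  refine ⟨c, hc0, fun n => ?_⟩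
  by_cases hn : n < N
  · have : (b : ℝ) ^ (-L * (a n : ℝ)) ≤ 1 :=
      Real.rpow_le_one_of_one_le_of_nonpos hb1 (by nlinarith [Nat.cast_nonneg (α := ℝ) (a n)])
    nlinarith [hc1 n (Finset.mem_range.2 hn)]
  · have := hN n (by omega)
    have h0 : 0 < (b : ℝ) ^ (-L * (a n : ℝ)) := by positivity
    nlinarith

/-- The uniform condition at `N = n - 1`, rewritten in terms of `a n` by `a n < η' * a (n - 1)`. -/
lemma uniform_pred (b : ℕ) (hb : 2 ≤ b) (a : ℕ → ℕ) (hpos : ∀ n, 1 ≤ a n) (η' v ξ : ℝ)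
    (hη' : 0 < η') (hv : 0 < v)
    (hr : ∀ᶠ n in atTop, (a (n + 1) : ℝ) / (a n : ℝ) < η')
    (h : ∀ᶠ N in atTop, ∃ n, 1 ≤ n ∧ n ≤ N ∧
      dni ((b : ℝ) ^ (a n) * ξ) < (b : ℝ) ^ (-(a N : ℝ) * v)) :
    ∃ m, ∀ n, m ≤ n → ∃ j, 1 ≤ j ∧ j < n ∧
      dni ((b : ℝ) ^ (a j) * ξ) < (b : ℝ) ^ (-(v / η') * (a n : ℝ)) := by
  have hb1 : (1 : ℝ) ≤ b := by exact_mod_cast (by omega : 1 ≤ b)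
  obtain ⟨m, hm⟩ := eventually_atTop.1 (hr.and h)
  refine ⟨m + 1, fun n hn => ?_⟩
  obtain ⟨k, rfl⟩ : ∃ k, n = k + 1 := ⟨n - 1, by omega⟩
  obtain ⟨h1, j, hj1, hjk, hjd⟩ := hm k (by omega)
  refine ⟨j, hj1, by omega, hjd.trans_le (Real.rpow_le_rpow_of_exponent_le hb1 ?_)⟩
  have hk : (0 : ℝ) < a k := by exact_mod_cast hpos k
  rw [div_lt_iff₀ hk] at h1
  have : v / η' * (a (k + 1) : ℝ) ≤ v / η' * (η' * a k) := by gcongr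
  have e : v / η' * (η' * a k) = a k * v := by field_simp
  linarith

/-! ### The dimension bound -/

theorem stmt6 (b : ℕ) (hb : 2 ≤ b) (a : ℕ → ℕ) (ha : StrictMono a)
    (hpos : ∀ n, 1 ≤ a n) (η : ℝ)
    (hbdd : BddAbove (Set.range fun n => (a (n + 1) : ℝ) / (a n : ℝ)))
    (hη : Filter.limsup (fun n => (a (n + 1) : ℝ) / (a n : ℝ)) atTop = η)
    (θ w ρ : ℝ) (hw : 0 < w) (hwη : w < η) (hρ : 0 ≤ ρ)
    (hθge : max 1 (1 / (η - w)) ≤ θ) :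
    dimH {ξ : ℝ | (w : EReal) ≤ vhatbA b a ξ ∧
        ((θ * w : ℝ) : EReal) ≤ vbA b a ξ ∧ vbA b a ξ ≤ ((θ * w + ρ : ℝ) : EReal)} ≤
      ENNReal.ofReal ((w * (η * θ - 1 - θ * w) + ρ * (η - w)) /
        ((1 + θ * w) * ((η * θ - 1) * w + η * ρ))) := by
  obtain ⟨hθ1, hθ2⟩ := max_le_iff.1 hθge
  rw [div_le_iff₀ (by linarith)] at hθ2
  set D := (w * (η * θ - 1 - θ * w) + ρ * (η - w)) /
        ((1 + θ * w) * ((η * θ - 1) * w + η * ρ)) with hD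
  have hD0 : 0 ≤ D := by
    have hη0 : 0 < η := hw.trans hwη
    have h1 : 0 ≤ η * θ - 1 - θ * w := by linarith
    have h2 : 0 ≤ η - w := by linarith
    have h3 : 0 ≤ η * θ - 1 := by nlinarith
    positivity
  refine ENNReal.le_of_forall_pos_le_add fun ε hε _ => ?_
  have hεR : (0 : ℝ) < ε := by exact_mod_cast hε
  rw [← ENNReal.ofReal_coe_nnreal, ← ENNReal.ofReal_add hD0 hεR.le]
  obtain ⟨η', v, L, u, β, hη', hv0, hvw, hL, hu0, hu, hβ0, hβ1, hβ, hβs⟩ :=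
    exists_params η θ w ρ (D + ε) hw hwη hρ hθ1 hθ2 (by linarith)
  have hθw : 0 < θ * w := by positivity
  have hL0 : 0 < L := by linarith
  have hr : ∀ᶠ n in atTop, (a (n + 1) : ℝ) / (a n : ℝ) < η' :=
    eventually_lt_of_limsup_lt (hη.trans_lt hη') hbdd.isBoundedUnder_of_range
  -- the countably many pieces on which all bounds are uniform
  set T : ℕ → Set ℝ := fun m => {ξ : ℝ | |ξ| ≤ m ∧
    (∀ n, m ≤ n → ∃ j, 1 ≤ j ∧ j < n ∧
      dni ((b : ℝ) ^ (a j) * ξ) < (b : ℝ) ^ (-(v / η') * (a n : ℝ))) ∧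
    (∀ n, 1 ≤ n → 1 / ((m : ℝ) + 1) * (b : ℝ) ^ (-L * (a n : ℝ)) ≤
      dni ((b : ℝ) ^ (a n) * ξ)) ∧
    ∃ᶠ n in atTop, 1 ≤ n ∧ dni ((b : ℝ) ^ (a n) * ξ) < (b : ℝ) ^ (-u * (a n : ℝ))} with hT
  have hTdim : ∀ m, dimH (T m) ≤ ENNReal.ofReal (D + ε) := fun m =>
    dimH_piece_le b hb a ha (v / η') L β (1 / ((m : ℝ) + 1)) m u (D + ε) hL0 hβ0 hβ1 hβ
      (by positivity) (by positivity) hu0 (by linarith) hβs m (T m) (fun ξ h => h.1)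
      (fun ξ h => h.2.1) (fun ξ h => h.2.2.1) (fun ξ h => h.2.2.2)
  refine (dimH_mono (t := ⋃ m, T m) ?_).trans (by rw [dimH_iUnion]; exact iSup_le hTdim)
  rintro ξ ⟨h1, h2, h3⟩
  obtain ⟨m1, hm1⟩ := uniform_pred b hb a hpos η' v ξ (by linarith) hv0 hr
    (uniform_of_lt_vhatbA b hb a ξ v ((EReal.coe_lt_coe_iff.2 hvw).trans_le h1))
  obtain ⟨c, hc0, hc⟩ := exists_const_of_vbA_lt b hb a ha ξ L hL0.le
    (h3.trans_lt (EReal.coe_lt_coe_iff.2 hL))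
  obtain ⟨m2, hm2⟩ := exists_nat_one_div_lt hc0
  obtain ⟨m3, hm3⟩ := exists_nat_ge |ξ|
  refine mem_iUnion.2 ⟨max m1 (max m2 m3), ?_, fun n hn => hm1 n (le_trans (le_max_left _ _) hn),
    fun n _ => le_trans ?_ (hc n),
    frequently_of_lt_vbA b hb a ξ u ((EReal.coe_lt_coe_iff.2 hu).trans_le h2)⟩
  · exact hm3.trans (by exact_mod_cast (le_max_right m2 m3).trans (le_max_right _ _))
  · refine mul_le_mul_of_nonneg_right (le_trans ?_ hm2.le) (by positivity)
    have : (m2 : ℝ) ≤ (max m1 (max m2 m3) : ℕ) := by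
      exact_mod_cast (le_max_left m2 m3).trans (le_max_right _ _)
    gcongr
end
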